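/- Let ζₖ = e^{iθₖ} with 0 ≤ θ₁ < ⋯ < θₙ < 2π be on the unit circle and bₖ > 0. The function g̃(θ) = −(i/(1+ξ̄_â)) g(e^{iθ}) is real-valued on ℝ ∖ {θ₁,…,θₙ} with derivative ∂_θ g̃(θ) = −Σₖ bₖ/(4 sin²((θₖ−θ)/2)) < 0, and g̃(θₖ⁻) = −∞, g̃(θₖ⁺) = +∞; consequently g̃ has exactly n zeros ρ₁ < ⋯ < ρₙ, and either ρₖ ∈ (θₖ, θₖ₊₁) for all k or ρₖ₊₁ ∈ (θₖ, θₖ₊₁) for all k (indices mod n). -/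

import Mathlib

open Complex

open Filter Topology

/-- Two unit complex numbers agree iff the sine of half the difference of arguments vanishes. -/
lemma exp_I_mul_eq_iff_sin_half_eq_zero (x t : ℝ) :
    exp (I * x) = exp (I * t) ↔ Real.sin ((x - t) / 2) = 0 := by
  rw [Complex.exp_eq_exp_iff_exists_int, Real.sin_eq_zero_iff]
  refine exists_congr fun m => ⟨fun h => ?_, fun h => ?_⟩
  · have h' : ((x : ℂ)) = ((t + m * (2 * Real.pi) : ℝ) : ℂ) := by
      apply mul_left_cancel₀ I_ne_zero
      rw [h]
      push_cast
      ring
    rw [Complex.ofReal_inj.1 h']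
    ring
  · have h' : x = t + m * (2 * Real.pi) := by linarith
    rw [h']
    push_cast
    ring

/-- A weighted sum of the functions `cot ((x - θ k) / 2) - s`, with halved weights. -/
noncomputable def cotSum {ι : Type*} [Fintype ι] (θ b : ι → ℝ) (s x : ℝ) : ℝ :=
  ∑ k, b k / 2 *
    ((Real.cos ((x - θ k) / 2) - s * Real.sin ((x - θ k) / 2)) / Real.sin ((x - θ k) / 2))

lemma cayley_term_eq (b s x t : ℝ) (ξ : ℂ) (hξ : ξ = (1 + I * s) / (1 - I * s)) :
    -(I / (1 + (starRingEnd ℂ) ξ)) *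
        ((b : ℂ) * (exp (I * x) + exp (I * t) * (starRingEnd ℂ) ξ) / (exp (I * t) - exp (I * x))) =
      ((b / 2 * ((Real.cos ((x - t) / 2) - s * Real.sin ((x - t) / 2)) /
        Real.sin ((x - t) / 2)) : ℝ) : ℂ) := by
  by_cases h0 : Real.sin ((x - t) / 2) = 0
  · rw [(exp_I_mul_eq_iff_sin_half_eq_zero x t).2 h0]
    simp [h0]
  have hne : exp (I * x) ≠ exp (I * t) :=
    fun h => h0 ((exp_I_mul_eq_iff_sin_half_eq_zero x t).1 h)
  have hs : (1 : ℂ) + I * s ≠ 0 := by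
    intro h
    simpa using congrArg re h
  have hconj : (starRingEnd ℂ) ξ = (1 - I * s) / (1 + I * s) := by
    rw [hξ]
    simp [sub_eq_add_neg]
  have hsum : 1 + (starRingEnd ℂ) ξ = 2 / (1 + I * s) := by
    rw [hconj]
    field_simp
    ring
  set w := exp ((((x : ℂ) - t) / 2) * I) with hw
  have hw0 : w ≠ 0 := exp_ne_zero _
  have hwx : exp (I * x) = exp (I * t) * w ^ 2 := by
    rw [hw, ← exp_nat_mul, ← exp_add]
    congr 1
    push_cast
    ring
  have hwn : exp (-(((x : ℂ) - t) / 2) * I) = w⁻¹ := by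
    rw [hw, ← exp_neg]
    congr 1
    ring
  have hv : exp (I * t) ≠ 0 := exp_ne_zero _
  have hw1 : w ^ 2 - 1 ≠ 0 := by
    intro h
    apply hne
    rw [hwx, sub_eq_zero.1 h, mul_one]
  have hw1' : 1 - w ^ 2 ≠ 0 := by
    intro h
    apply hw1
    linear_combination -h
  have hS : sin (((x : ℂ) - t) / 2) = -I * (w ^ 2 - 1) / (2 * w) := by
    rw [Complex.sin, hwn, ← hw]
    field_simp
    ring
  have hC : cos (((x : ℂ) - t) / 2) = (w ^ 2 + 1) / (2 * w) := by
    rw [Complex.cos, hwn, ← hw]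
    field_simp
  push_cast
  have hI : I ≠ 0 := I_ne_zero
  rw [hsum, hconj, hwx, hS, hC,
    show exp (I * t) - exp (I * t) * w ^ 2 = exp (I * t) * (1 - w ^ 2) by ring]
  generalize exp (I * t) = v at hv
  clear_value w
  have e1 : -(I / (2 / (1 + I * s))) *
      (b * (v * w ^ 2 + v * ((1 - I * s) / (1 + I * s))) / (v * (1 - w ^ 2))) =
      -(I / 2) * b * (w ^ 2 * (1 + I * s) + (1 - I * s)) / (1 - w ^ 2) := by
    field_simp
  have e2 : (b : ℂ) / 2 * (((w ^ 2 + 1) / (2 * w) - s * (-I * (w ^ 2 - 1) / (2 * w))) /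
      (-I * (w ^ 2 - 1) / (2 * w))) =
      b / 2 * (((w ^ 2 + 1) + s * I * (w ^ 2 - 1)) / (-I * (w ^ 2 - 1))) := by
    field_simp
    ring
  rw [e1, e2, mul_div_assoc', div_eq_div_iff hw1' (mul_ne_zero (neg_ne_zero.2 hI) hw1)]
  linear_combination (-(b : ℂ) / 2 * (1 - w ^ 2) * (w ^ 2 + 1 + s * I * (w ^ 2 - 1))) * I_sq

section CotSum

variable {ι : Type*} [Fintype ι] {θ b : ι → ℝ} {s x : ℝ}

lemma hasDerivAt_cotSum (hx : ∀ k, Real.sin ((x - θ k) / 2) ≠ 0) :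
    HasDerivAt (cotSum θ b s) (-∑ k, b k / (4 * Real.sin ((θ k - x) / 2) ^ 2)) x := by
  unfold cotSum
  rw [← Finset.sum_neg_distrib]
  refine HasDerivAt.fun_sum fun k _ => ?_
  have hlin : HasDerivAt (fun y : ℝ => (y - θ k) / 2) (1 / 2) x :=
    ((hasDerivAt_id x).sub_const (θ k)).div_const 2
  have hsin := hlin.sin
  have hcos := hlin.cos
  refine (((hcos.sub (hsin.const_mul s)).div hsin (hx k)).const_mul (b k / 2)).congr_deriv ?_
  have hk := hx k
  rw [show (θ k - x) / 2 = -((x - θ k) / 2) by ring, Real.sin_neg]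
  simp only [Pi.sub_apply]
  have hsq := Real.sin_sq_add_cos_sq ((x - θ k) / 2)
  field_simp
  linear_combination -(4 * b k) * hsq

lemma cotSum_add_two_pi (x : ℝ) : cotSum θ b s (x + 2 * Real.pi) = cotSum θ b s x := by
  refine Finset.sum_congr rfl fun k _ => ?_
  rw [show (x + 2 * Real.pi - θ k) / 2 = (x - θ k) / 2 + Real.pi by ring, Real.sin_add_pi,
    Real.cos_add_pi, ← neg_div_neg_eq]
  ring_nf

lemma strictAntiOn_cotSum [Nonempty ι] (hb : ∀ k, 0 < b k) {p q : ℝ}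
    (h : ∀ x ∈ Set.Ioo p q, ∀ k, Real.sin ((x - θ k) / 2) ≠ 0) :
    StrictAntiOn (cotSum θ b s) (Set.Ioo p q) := by
  refine strictAntiOn_of_deriv_neg (convex_Ioo p q)
    (fun x hx => (hasDerivAt_cotSum (h x hx)).continuousAt.continuousWithinAt) fun x hx => ?_
  rw [interior_Ioo] at hx
  rw [(hasDerivAt_cotSum (h x hx)).deriv, neg_lt_zero]
  refine Finset.sum_pos (fun k _ => div_pos (hb k) ?_) Finset.univ_nonempty
  have hk := h x hx k
  rw [show (θ k - x) / 2 = -((x - θ k) / 2) by ring, Real.sin_neg, neg_sq]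
  positivity

lemma exists_cotSum_eq_zero {p q : ℝ} (hpq : p < q)
    (h : ∀ x ∈ Set.Ioo p q, ∀ k, Real.sin ((x - θ k) / 2) ≠ 0)
    (hp : Tendsto (cotSum θ b s) (𝓝[>] p) atTop) (hq : Tendsto (cotSum θ b s) (𝓝[<] q) atBot) :
    ∃ x ∈ Set.Ioo p q, cotSum θ b s x = 0 := by
  have := nhdsGT_neBot_of_exists_gt ⟨q, hpq⟩
  exact isPreconnected_Ioo.intermediate_value_Iii
    (le_principal_iff.2 (Ioo_mem_nhdsLT hpq)) (le_principal_iff.2 (Ioo_mem_nhdsGT hpq))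
    (fun x hx => (hasDerivAt_cotSum (h x hx)).continuousAt.continuousWithinAt) hq hp
    (Set.mem_univ 0)

lemma tendsto_sin_half_nhdsGT (t : ℝ) :
    Tendsto (fun y => Real.sin ((y - t) / 2)) (𝓝[>] t) (𝓝[>] 0) := by
  refine tendsto_nhdsWithin_iff.2 ⟨?_, ?_⟩
  · have h : Continuous fun y => Real.sin ((y - t) / 2) := by fun_prop
    simpa using (h.tendsto t).mono_left nhdsWithin_le_nhds
  · filter_upwards [Ioo_mem_nhdsGT (show t < t + Real.pi by linarith [Real.pi_pos])] with y hy
    exact Real.sin_pos_of_pos_of_lt_pi (by linarith [hy.1]) (by linarith [hy.2, Real.pi_pos])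

lemma tendsto_sin_half_nhdsLT (t : ℝ) :
    Tendsto (fun y => Real.sin ((y - t) / 2)) (𝓝[<] t) (𝓝[<] 0) := by
  refine tendsto_nhdsWithin_iff.2 ⟨?_, ?_⟩
  · have h : Continuous fun y => Real.sin ((y - t) / 2) := by fun_prop
    simpa using (h.tendsto t).mono_left nhdsWithin_le_nhds
  · filter_upwards [Ioo_mem_nhdsLT (show t - Real.pi < t by linarith [Real.pi_pos])] with y hy
    exact Real.sin_neg_of_neg_of_neg_pi_lt (by linarith [hy.2]) (by linarith [hy.1, Real.pi_pos])

lemma tendsto_cos_sub_mul_sin_half (s t : ℝ) :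
    Tendsto (fun y => Real.cos ((y - t) / 2) - s * Real.sin ((y - t) / 2)) (𝓝 t) (𝓝 1) := by
  have h : Continuous fun y => Real.cos ((y - t) / 2) - s * Real.sin ((y - t) / 2) := by fun_prop
  simpa using h.tendsto t

variable [DecidableEq ι] {k : ι}

lemma tendsto_cotSum_erase (hk : ∀ j ≠ k, Real.sin ((θ k - θ j) / 2) ≠ 0) :
    Tendsto (fun y => ∑ j ∈ Finset.univ.erase k, b j / 2 *
      ((Real.cos ((y - θ j) / 2) - s * Real.sin ((y - θ j) / 2)) / Real.sin ((y - θ j) / 2)))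
      (𝓝 (θ k)) (𝓝 (∑ j ∈ Finset.univ.erase k, b j / 2 *
      ((Real.cos ((θ k - θ j) / 2) - s * Real.sin ((θ k - θ j) / 2)) /
        Real.sin ((θ k - θ j) / 2)))) := by
  refine tendsto_finsetSum _ fun j hj => ?_
  have hj := hk j (Finset.ne_of_mem_erase hj)
  exact ContinuousAt.tendsto (f := fun y => b j / 2 *
      ((Real.cos ((y - θ j) / 2) - s * Real.sin ((y - θ j) / 2)) / Real.sin ((y - θ j) / 2)))
    (by fun_prop (disch := assumption))

lemma tendsto_cotSum_nhdsGT (hb : 0 < b k) (hk : ∀ j ≠ k, Real.sin ((θ k - θ j) / 2) ≠ 0) :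
    Tendsto (cotSum θ b s) (𝓝[>] (θ k)) atTop := by
  have hcos := (tendsto_cos_sub_mul_sin_half s (θ k)).mono_left
    (nhdsWithin_le_nhds (s := Set.Ioi (θ k)))
  have hinv := tendsto_inv_nhdsGT_zero.comp (tendsto_sin_half_nhdsGT (θ k))
  have h := ((hcos.pos_mul_atTop one_pos hinv).const_mul_atTop (half_pos hb)).atTop_add
    ((tendsto_cotSum_erase (b := b) (s := s) hk).mono_left nhdsWithin_le_nhds)
  refine h.congr fun y => ?_
  rw [cotSum, ← Finset.add_sum_erase _ _ (Finset.mem_univ k)]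
  simp [div_eq_mul_inv]

lemma tendsto_cotSum_nhdsLT (hb : 0 < b k) (hk : ∀ j ≠ k, Real.sin ((θ k - θ j) / 2) ≠ 0) :
    Tendsto (cotSum θ b s) (𝓝[<] (θ k)) atBot := by
  have hcos := (tendsto_cos_sub_mul_sin_half s (θ k)).mono_left
    (nhdsWithin_le_nhds (s := Set.Iio (θ k)))
  have hinv := tendsto_inv_nhdsLT_zero.comp (tendsto_sin_half_nhdsLT (θ k))
  have h := ((hcos.pos_mul_atBot one_pos hinv).const_mul_atBot (half_pos hb)).atBot_add
    ((tendsto_cotSum_erase (b := b) (s := s) hk).mono_left nhdsWithin_le_nhds)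
  refine h.congr fun y => ?_
  rw [cotSum, ← Finset.add_sum_erase _ _ (Finset.mem_univ k)]
  simp [div_eq_mul_inv]

end CotSum

lemma sin_half_ne_zero {x : ℝ} (h₁ : -(2 * Real.pi) < x) (h₂ : x < 2 * Real.pi) (h₀ : x ≠ 0) :
    Real.sin (x / 2) ≠ 0 := by
  rw [Ne, Real.sin_eq_zero_iff_of_lt_of_lt (by linarith) (by linarith)]
  simpa using h₀

/-- The successor of `θ k` in cyclic order, lifted to the real line. -/
noncomputable def cyclicSucc {n : ℕ} (hn : 0 < n) (θ : Fin n → ℝ) (k : Fin n) : ℝ :=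
  if hk : (k : ℕ) + 1 < n then θ ⟨(k : ℕ) + 1, hk⟩ else θ ⟨0, hn⟩ + 2 * Real.pi

section CyclicSucc

variable {n : ℕ} (hn : 0 < n) {θ b : Fin n → ℝ} {s : ℝ} {j k : Fin n}

lemma apply_zero_le (hθ : StrictMono θ) (k : Fin n) : θ ⟨0, hn⟩ ≤ θ k :=
  hθ.monotone (Fin.mk_le_of_le_val (Nat.zero_le _))

lemma cyclicSucc_le_of_lt (hθ : StrictMono θ) (hjk : j < k) : cyclicSucc hn θ j ≤ θ k := by
  have hj : (j : ℕ) + 1 < n := lt_of_le_of_lt (Nat.succ_le_of_lt hjk) k.2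
  rw [cyclicSucc, dif_pos hj]
  exact hθ.monotone (Fin.mk_le_of_le_val (Nat.succ_le_of_lt hjk))

lemma cyclicSucc_le_add_two_pi (hwidth : ∀ k, θ k < θ ⟨0, hn⟩ + 2 * Real.pi) (k : Fin n) :
    cyclicSucc hn θ k ≤ θ ⟨0, hn⟩ + 2 * Real.pi := by
  unfold cyclicSucc
  split_ifs
  exacts [(hwidth _).le, le_rfl]

lemma lt_cyclicSucc (hθ : StrictMono θ) (hwidth : ∀ k, θ k < θ ⟨0, hn⟩ + 2 * Real.pi)
    (k : Fin n) : θ k < cyclicSucc hn θ k := by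
  unfold cyclicSucc
  split_ifs
  exacts [hθ (Fin.lt_def.2 (Nat.lt_succ_self _)), hwidth k]

lemma sin_half_sub_ne_zero_of_ne (hθ : StrictMono θ)
    (hwidth : ∀ k, θ k < θ ⟨0, hn⟩ + 2 * Real.pi) (hjk : j ≠ k) :
    Real.sin ((θ k - θ j) / 2) ≠ 0 := by
  have hj := apply_zero_le hn hθ j
  have hk := apply_zero_le hn hθ k
  exact sin_half_ne_zero (by linarith [hwidth j]) (by linarith [hwidth k])
    (sub_ne_zero.2 (hθ.injective.ne hjk.symm))

lemma sin_half_sub_ne_zero_of_mem_Ioo (hθ : StrictMono θ)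
    (hwidth : ∀ k, θ k < θ ⟨0, hn⟩ + 2 * Real.pi) {x : ℝ}
    (hx : x ∈ Set.Ioo (θ k) (cyclicSucc hn θ k)) (j : Fin n) :
    Real.sin ((x - θ j) / 2) ≠ 0 := by
  have hj := apply_zero_le hn hθ j
  have hk := apply_zero_le hn hθ k
  have hupper := cyclicSucc_le_add_two_pi hn hwidth k
  rcases le_or_gt j k with hjk | hjk
  · have hle := hθ.monotone hjk
    exact sin_half_ne_zero (by linarith [hx.1, Real.pi_pos]) (by linarith [hx.2])
      (by linarith [hx.1])
  · have hle := cyclicSucc_le_of_lt hn hθ hjk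
    exact sin_half_ne_zero (by linarith [hx.1, hwidth j]) (by linarith [hx.2, Real.pi_pos])
      (by linarith [hx.2])

lemma exists_mem_Ioo_cyclicSucc {x : ℝ}
    (hx₀ : θ ⟨0, hn⟩ ≤ x) (hx₁ : x < θ ⟨0, hn⟩ + 2 * Real.pi) (hx : ∀ k, x ≠ θ k) :
    ∃ k, x ∈ Set.Ioo (θ k) (cyclicSucc hn θ k) := by
  obtain ⟨k, hk, hmax⟩ := (Finset.univ.filter fun k => θ k ≤ x).exists_maximal
    ⟨⟨0, hn⟩, by simpa using hx₀⟩
  simp only [Finset.mem_filter, Finset.mem_univ, true_and] at hk hmax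
  refine ⟨k, lt_of_le_of_ne hk (hx k).symm, ?_⟩
  unfold cyclicSucc
  split_ifs with hk'
  · by_contra! hle
    have hle' := Fin.le_def.1 (hmax hle (Fin.le_def.2 (Nat.le_succ _)))
    exact absurd hle' (by simp)
  · exact hx₁

lemma tendsto_cotSum_cyclicSucc (hθ : StrictMono θ)
    (hwidth : ∀ k, θ k < θ ⟨0, hn⟩ + 2 * Real.pi) (hb : ∀ k, 0 < b k) (k : Fin n) :
    Tendsto (cotSum θ b s) (𝓝[<] (cyclicSucc hn θ k)) atBot := by
  have hpole (k : Fin n) : Tendsto (cotSum θ b s) (𝓝[<] (θ k)) atBot :=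
    tendsto_cotSum_nhdsLT (hb k) fun _ hj => sin_half_sub_ne_zero_of_ne hn hθ hwidth hj
  unfold cyclicSucc
  split_ifs
  · exact hpole _
  · have hshift : Tendsto (fun y => y - 2 * Real.pi) (𝓝[<] (θ ⟨0, hn⟩ + 2 * Real.pi))
        (𝓝[<] (θ ⟨0, hn⟩)) := by
      refine tendsto_nhdsWithin_iff.2 ⟨?_, ?_⟩
      · have h : Continuous fun y : ℝ => y - 2 * Real.pi := by fun_prop
        simpa using (h.tendsto (θ ⟨0, hn⟩ + 2 * Real.pi)).mono_left nhdsWithin_le_nhds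
      · filter_upwards [self_mem_nhdsWithin] with y hy
        exact sub_lt_iff_lt_add.2 (Set.mem_Iio.1 hy)
    refine ((hpole ⟨0, hn⟩).comp hshift).congr fun y => ?_
    rw [Function.comp_apply, ← cotSum_add_two_pi, sub_add_cancel]

/-- Between cyclically consecutive poles, a cotangent sum has a zero. -/
lemma exists_cotSum_eq_zero_mem_Ioo_cyclicSucc (hθ : StrictMono θ)
    (hwidth : ∀ k, θ k < θ ⟨0, hn⟩ + 2 * Real.pi) (hb : ∀ k, 0 < b k) (k : Fin n) :
    ∃ x ∈ Set.Ioo (θ k) (cyclicSucc hn θ k), cotSum θ b s x = 0 :=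
  exists_cotSum_eq_zero (lt_cyclicSucc hn hθ hwidth k)
    (fun _ hx => sin_half_sub_ne_zero_of_mem_Ioo hn hθ hwidth hx)
    (tendsto_cotSum_nhdsGT (hb k) fun _ hj => sin_half_sub_ne_zero_of_ne hn hθ hwidth hj)
    (tendsto_cotSum_cyclicSucc hn hθ hwidth hb k)

end CyclicSucc

/-- the function g̃(θ) = −(i/(1+ξ̄_â))·g(e^{iθ}) is real-valued off the θₖ,
has derivative −Σₖ bₖ/(4 sin²((θₖ−θ)/2)) < 0, tends to −∞ and +∞ at θₖ⁻ and θₖ⁺,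
and has exactly n zeros ρ₁ < ⋯ < ρₙ interlacing the θₖ in one of the two possible ways. -/
theorem stmt_5 (n : ℕ) (hn : 0 < n) (θk : Fin n → ℝ)
    (hθ : StrictMono θk) (hθ0 : 0 ≤ θk ⟨0, hn⟩) (hθlt : ∀ k, θk k < 2 * Real.pi)
    (b : Fin n → ℝ) (hb : ∀ k, 0 < b k) (a : ℝ)
    (ζ : Fin n → ℂ) (hζ : ∀ k, ζ k = Complex.exp (I * θk k))
    (ξa : ℂ) (hξa : ξa = (1 + I * ((a / ∑ k, b k : ℝ) : ℂ)) / (1 - I * ((a / ∑ k, b k : ℝ) : ℂ)))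
    (g : ℂ → ℂ)
    (hg : ∀ z, g z = ∑ k, (b k : ℂ) * (z + ζ k * (starRingEnd ℂ) ξa) / (ζ k - z))
    (gt : ℝ → ℂ)
    (hgt : ∀ x : ℝ, gt x = -(I / (1 + (starRingEnd ℂ) ξa)) * g (Complex.exp (I * x))) :
    (∀ x : ℝ, (∀ k, Complex.exp (I * x) ≠ ζ k) → (gt x).im = 0) ∧
    (∀ x : ℝ, (∀ k, Complex.exp (I * x) ≠ ζ k) →
      HasDerivAt (fun y => (gt y).re)
        (-∑ k, b k / (4 * Real.sin ((θk k - x) / 2) ^ 2)) x) ∧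
    (∀ k : Fin n,
      Filter.Tendsto (fun y => (gt y).re) (nhdsWithin (θk k) (Set.Iio (θk k))) Filter.atBot ∧
      Filter.Tendsto (fun y => (gt y).re) (nhdsWithin (θk k) (Set.Ioi (θk k))) Filter.atTop) ∧
    (∃ ρs : Fin n → ℝ, StrictMono ρs ∧
      (∀ k, (gt (ρs k)).re = 0 ∧ ∀ j, Complex.exp (I * ρs k) ≠ ζ j) ∧
      (∀ x : ℝ, θk ⟨0, hn⟩ ≤ x → x < θk ⟨0, hn⟩ + 2 * Real.pi →
        (∀ k, Complex.exp (I * x) ≠ ζ k) → (gt x).re = 0 →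
        ∃ k : Fin n, ∃ m : ℤ, x = ρs k + 2 * Real.pi * m) ∧
      ((∀ k : Fin n, ∀ hk : (k : ℕ) + 1 < n,
          θk k < ρs k ∧ ρs k < θk ⟨(k : ℕ) + 1, hk⟩) ∧
        θk ⟨n - 1, by omega⟩ < ρs ⟨n - 1, by omega⟩ ∧
        ρs ⟨n - 1, by omega⟩ < θk ⟨0, hn⟩ + 2 * Real.pi ∨
       (∀ k : Fin n, ∀ hk : (k : ℕ) + 1 < n,
          θk k < ρs ⟨(k : ℕ) + 1, hk⟩ ∧ ρs ⟨(k : ℕ) + 1, hk⟩ < θk ⟨(k : ℕ) + 1, hk⟩) ∧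
        θk ⟨n - 1, by omega⟩ - 2 * Real.pi < ρs ⟨0, hn⟩ ∧ ρs ⟨0, hn⟩ < θk ⟨0, hn⟩)) := by
  have hgtF (x : ℝ) : gt x = ((cotSum θk b (a / ∑ k, b k) x : ℝ) : ℂ) := by
    rw [hgt, hg, Finset.mul_sum, cotSum, ofReal_sum]
    refine Finset.sum_congr rfl fun k _ => ?_
    rw [hζ]
    exact cayley_term_eq _ _ _ _ _ hξa
  have hre : (fun y => (gt y).re) = cotSum θk b (a / ∑ k, b k) := by
    funext y
    rw [hgtF, ofReal_re]
  have hpole (x : ℝ) (k : Fin n) : exp (I * x) ≠ ζ k ↔ Real.sin ((x - θk k) / 2) ≠ 0 := by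
    rw [hζ, Ne, exp_I_mul_eq_iff_sin_half_eq_zero]
  have hwidth (k : Fin n) : θk k < θk ⟨0, hn⟩ + 2 * Real.pi := by linarith [hθlt k]
  have hsep (k : Fin n) : ∀ j ≠ k, Real.sin ((θk k - θk j) / 2) ≠ 0 :=
    fun _ hj => sin_half_sub_ne_zero_of_ne hn hθ hwidth hj
  have : Nonempty (Fin n) := ⟨⟨0, hn⟩⟩
  refine ⟨fun x _ => by rw [hgtF, ofReal_im], fun x hx => ?_, fun k => ?_, ?_⟩
  · rw [hre]
    exact hasDerivAt_cotSum fun k => (hpole x k).1 (hx k)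
  · rw [hre]
    exact ⟨tendsto_cotSum_nhdsLT (hb k) (hsep k), tendsto_cotSum_nhdsGT (hb k) (hsep k)⟩
  choose ρs hρ hρ0 using
    exists_cotSum_eq_zero_mem_Ioo_cyclicSucc (s := a / ∑ k, b k) hn hθ hwidth hb
  refine ⟨ρs, fun i j hij => ?_, fun k => ⟨?_, fun j => ?_⟩, fun x hx₀ hx₁ hx hx' => ?_,
    Or.inl ⟨fun k hk => ?_, (hρ _).1, ?_⟩⟩
  · exact (hρ i).2.trans_le ((cyclicSucc_le_of_lt hn hθ hij).trans (hρ j).1.le)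
  · rw [hgtF, ofReal_re, hρ0]
  · exact (hpole _ _).2 (sin_half_sub_ne_zero_of_mem_Ioo hn hθ hwidth (hρ k) j)
  · rw [hgtF, ofReal_re] at hx'
    obtain ⟨k, hk⟩ := exists_mem_Ioo_cyclicSucc hn hx₀ hx₁ fun k h => by
      rw [h] at hx
      exact hx k (hζ k).symm
    have hanti := strictAntiOn_cotSum (s := a / ∑ k, b k) hb
      fun x hx => sin_half_sub_ne_zero_of_mem_Ioo hn hθ hwidth (k := k) (x := x) hx
    refine ⟨k, 0, ?_⟩
    rw [hanti.injOn hk (hρ k) (hx'.trans (hρ0 k).symm)]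
    simp
  · have h := hρ k
    rwa [cyclicSucc, dif_pos hk] at h
  · exact (hρ _).2.trans_le (cyclicSucc_le_add_two_pi hn hwidth _)
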